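/- If the comodule category A_F of the normal triangular matrix comonad F is hereditary, then for each 1 ≤ m ≤ n−1 and every epimorphism p : (E, d_E) ⟶ (E', d_{E'}) between injective F^{≤m}-comodules, the morphism T^m(p) is a split epimorphism. -/

import Mathlib

/-!
STATEMENT 16: If the category of comodules over a normal triangular matrix comonad
`F` on `A₁ × ⋯ × Aₙ` is hereditary, then for each `1 ≤ m ≤ n - 1` the functor
`T^m : (F^{≤m})-comodules ⥤ (F^{>m})-comodules` (characterised below by the universal
property of the defining equalizers) sends every epimorphism between injective
`F^{≤m}`-comodules to a split epimorphism.
-/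

open CategoryTheory Limits

universe v u

attribute [local instance] CategoryTheory.Abelian.hasFiniteBiproducts
attribute [local instance] CategoryTheory.Limits.hasBinaryBiproducts_of_finite_biproducts

variable {n : ℕ} {A : Fin n → Type u} [∀ i, Category.{v} (A i)]
  [∀ i, Abelian (A i)] [∀ i, EnoughInjectives (A i)]
variable (F : ∀ ⦃i j : Fin n⦄, i < j → (A i ⥤ A j))
variable (δ : ∀ ⦃i k j : Fin n⦄ (h₁ : i < k) (h₂ : k < j), F (h₁.trans h₂) ⟶ F h₁ ⋙ F h₂)

/-- A comodule, over the sub-linearly-ordered set `s` of indices, for the triangular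
matrix data `(F, δ)`.  For `s = Set.univ` this is exactly the category of comodules
over the normal triangular matrix comonad `F`; for `s = {i | i < m}` (resp.
`s = {i | m ≤ i}`) it is the category of `F^{≤m}`-comodules (resp. `F^{>m}`-comodules). -/
structure Comod (s : Set (Fin n)) where
  X : ∀ i : s, A i.1
  d : ∀ {i j : s} (h : i.1 < j.1), X j ⟶ (F h).obj (X i)
  compat : ∀ {i k j : s} (h₁ : i.1 < k.1) (h₂ : k.1 < j.1),
    d h₂ ≫ (F h₂).map (d h₁) = d (h₁.trans h₂) ≫ (δ h₁ h₂).app (X i)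

/-- Morphisms of comodules. -/
@[ext]
structure ComodHom {s : Set (Fin n)} (M N : Comod F δ s) where
  f : ∀ i : s, M.X i ⟶ N.X i
  comm : ∀ {i j : s} (h : i.1 < j.1), f j ≫ N.d h = M.d h ≫ (F h).map (f i)

instance {s : Set (Fin n)} : Category (Comod F δ s) where
  Hom M N := ComodHom F δ M N
  id M := ⟨fun i => 𝟙 (M.X i), fun h => by simp⟩
  comp f g := ⟨fun i => f.f i ≫ g.f i, fun h => by
    rw [Category.assoc, g.comm, ← Category.assoc, f.comm, Category.assoc, Functor.map_comp]⟩
  id_comp f := by apply ComodHom.ext; funext i; exact Category.id_comp _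
  comp_id f := by apply ComodHom.ext; funext i; exact Category.comp_id _
  assoc f g h := by apply ComodHom.ext; funext i; exact Category.assoc _ _ _

/-- A category is hereditary if for every epimorphism `e : E ⟶ X` with `E` injective,
`X` is also injective. -/
def Hereditary (C : Type*) [Category C] : Prop :=
  ∀ ⦃E X : C⦄ (e : E ⟶ X), Epi e → Injective E → Injective X

/-- The set of indices `{1, …, m}` (`0`-based: `i < m`). -/
def lowSet (n m : ℕ) : Set (Fin n) := {i | (i : ℕ) < m}

/-- The set of indices `{m+1, …, n}` (`0`-based: `m ≤ i`). -/
def highSet (n m : ℕ) : Set (Fin n) := {i | m ≤ (i : ℕ)}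

theorem low_lt_high {m : ℕ} (i : lowSet n m) (j : highSet n m) : i.1 < j.1 :=
  Fin.lt_def.mpr (lt_of_lt_of_le i.2 j.2)

variable {m : ℕ}

/-- The value at index `j > m` of the image of an `F^{≤m}`-comodule `X` under the
bicomodule functor `F^m`, namely `⨁_{i ≤ m} F_{ij}(X_i)`. -/
noncomputable def VObj (X : Comod F δ (lowSet n m)) (j : highSet n m) : A j.1 :=
  ⨁ fun i : lowSet n m => (F (low_lt_high i j)).obj (X.X i)

/-- The value at an index `k ≤ m` of `F^{≤m}X`, i.e. `X_k ⊕ ⨁_{i<k} F_{ik}(X_i)`. -/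
noncomputable def Glow (X : Comod F δ (lowSet n m)) (k : lowSet n m) : A k.1 :=
  X.X k ⊞ (⨁ fun i : {i : lowSet n m // i.1 < k.1} => (F i.2).obj (X.X i.1))

/-- The total coaction `X_k ⟶ (F^{≤m}X)_k` of an `F^{≤m}`-comodule. -/
noncomputable def coact (X : Comod F δ (lowSet n m)) (k : lowSet n m) :
    X.X k ⟶ Glow F δ X k :=
  biprod.lift (𝟙 _) (biproduct.lift fun i => X.d i.2)

/-- The value at index `j > m` of the image under `F^m` of `F^{≤m}X`,
namely `⨁_{k ≤ m} F_{kj}((F^{≤m}X)_k)`. -/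
noncomputable def WObj (X : Comod F δ (lowSet n m)) (j : highSet n m) : A j.1 :=
  ⨁ fun k : lowSet n m => (F (low_lt_high k j)).obj (Glow F δ X k)

/-- The natural map `ρ : V^m X ⟶ F^m(F^{≤m}X)` assembled from the `δ^{ikj}`
(`i ≤ k ≤ m < j`), with identity components for `k = i`. -/
noncomputable def phi (X : Comod F δ (lowSet n m)) (j : highSet n m) :
    VObj F δ X j ⟶ WObj F δ X j :=
  biproduct.matrix fun i k =>
    if h : i.1 < k.1 then
      (δ h (low_lt_high k j)).app (X.X i) ≫
        (F (low_lt_high k j)).map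
          (biproduct.ι (fun i' : {i' : lowSet n m // i'.1 < k.1} =>
            (F i'.2).obj (X.X i'.1)) ⟨i, h⟩ ≫ biprod.inr)
    else if he : i = k then
      eqToHom (by subst he; rfl) ≫ (F (low_lt_high k j)).map biprod.inl
    else 0

/-- The map `V^m X ⟶ F^m(F^{≤m}X)` given by applying the `F_{kj}` to the total
coactions of the comodule `X`. -/
noncomputable def psi (X : Comod F δ (lowSet n m)) (j : highSet n m) :
    VObj F δ X j ⟶ WObj F δ X j :=
  biproduct.matrix fun i k =>
    if he : i = k then
      eqToHom (by subst he; rfl) ≫ (F (low_lt_high k j)).map (coact F δ X k)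
    else 0

/-- The `λ`-coaction of the bicomodule functor `V^m = F^m`, at indices
`m < j < k`: `(V^m X)_k ⟶ F_{jk}((V^m X)_j)`, with components `δ^{ijk}`. -/
noncomputable def lamV (X : Comod F δ (lowSet n m)) (j k : highSet n m)
    (h : j.1 < k.1) : VObj F δ X k ⟶ (F h).obj (VObj F δ X j) :=
  biproduct.desc fun i =>
    (δ (low_lt_high i j) h).app (X.X i) ≫
      (F h).map (biproduct.ι (fun i' : lowSet n m =>
        (F (low_lt_high i' j)).obj (X.X i')) i)

/-- The action of the functor `V^m` on a morphism of `F^{≤m}`-comodules. -/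
noncomputable def Vmap {X Y : Comod F δ (lowSet n m)} (f : X ⟶ Y) (j : highSet n m) :
    VObj F δ X j ⟶ VObj F δ Y j :=
  biproduct.map fun i => (F (low_lt_high i j)).map (f.f i)

/-!
A comodule over all indices is a pair of an `F^{≤m}`-comodule `M` and an `F^{>m}`-comodule `N`
together with cross structure maps `N_j ⟶ F_{ij}(M_i)` for `i ≤ m < j`. The two conditions on the
cross maps say that `N_j ⟶ ⨁_{i ≤ m} F_{ij}(M_i)` equalizes the pair defining `T^m M` and that the
resulting maps `N_j ⟶ (T^m M)_j` form a morphism of `F^{>m}`-comodules. Hence `A_F` is equivalent to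
the comma category of triples `(N, M, N ⟶ T^m M)`.

If that category is hereditary and `p : E ⟶ E'` is an epimorphism with `E` injective, then
`(T^m E, E, 𝟙)` is injective, hence so is its quotient `(T^m E, E', T^m p)`. The morphism
`(0, E', 0) ⟶ (T^m E, E', T^m p)` that is the identity on `E'` therefore extends along
`(0, E', 0) ⟶ (T^m E', E', 𝟙)`, and the extension is a section of `T^m p`.
-/

section HereditaryComma

variable {C D : Type*} [Category* C] [Category* D]

theorem Hereditary.of_equivalence (e : C ≌ D) (hC : Hereditary C) : Hereditary D := by
  intro E X q hq hE
  have hE' : Injective (e.inverse.obj E) := (e.symm.map_injective_iff E).mpr hE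
  exact (e.symm.map_injective_iff X).mp (hC (e.inverse.map q) inferInstance hE')

theorem comma_mono_of_mono_of_mono {B : Type*} [Category* B] {L : C ⥤ B} {R : D ⥤ B}
    {X Y : Comma L R} (f : X ⟶ Y) [Mono f.left] [Mono f.right] : Mono f where
  right_cancellation a b hab := by
    ext
    · exact (cancel_mono f.left).mp (congrArg CommaMorphism.left hab)
    · exact (cancel_mono f.right).mp (congrArg CommaMorphism.right hab)

theorem comma_epi_of_epi_of_epi {B : Type*} [Category* B] {L : C ⥤ B} {R : D ⥤ B}
    {X Y : Comma L R} (f : X ⟶ Y) [Epi f.left] [Epi f.right] : Epi f where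
  left_cancellation a b hab := by
    ext
    · exact (cancel_epi f.left).mp (congrArg CommaMorphism.left hab)
    · exact (cancel_epi f.right).mp (congrArg CommaMorphism.right hab)

variable (T : D ⥤ C)

/-- The object `(T E, E, 𝟙)` of the comma category of `𝟭 C` and `T`: the value at `E` of the
right adjoint of the projection to `D`. -/
def commaCofree (E : D) : Comma (𝟭 C) T where
  left := T.obj E
  right := E
  hom := 𝟙 _

/-- The object `(⊥, M, !)` of the comma category of `𝟭 C` and `T`: the value at `M` of the left
adjoint of the projection to `D`. -/
noncomputable def commaExtendInitial [HasInitial C] (M : D) : Comma (𝟭 C) T where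
  left := ⊥_ C
  right := M
  hom := initial.to _

variable {T}

/-- The morphism out of `(⊥, M, !)` with a given component in `D`. -/
noncomputable def commaExtendInitialDesc [HasInitial C] {M : D} {Y : Comma (𝟭 C) T}
    (a : M ⟶ Y.right) : commaExtendInitial T M ⟶ Y where
  left := initial.to _
  right := a
  w := initialIsInitial.hom_ext _ _

theorem comma_mono_right [HasInitial C] {X Y : Comma (𝟭 C) T} (f : X ⟶ Y) [Mono f] :
    Mono f.right where
  right_cancellation {M} a b hab := by
    have hdesc : commaExtendInitialDesc a ≫ f = commaExtendInitialDesc b ≫ f := by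
      ext
      · exact initialIsInitial.hom_ext _ _
      · exact hab
    exact congrArg CommaMorphism.right ((cancel_mono f).mp hdesc)

/-- The morphism into `(T E, E, 𝟙)` with a given component in `D`. -/
def commaCofreeLift {X : Comma (𝟭 C) T} {E : D} (a : X.right ⟶ E) : X ⟶ commaCofree T E where
  left := X.hom ≫ T.map a
  right := a
  w := Category.comp_id _

theorem commaCofree_hom_ext {X : Comma (𝟭 C) T} {E : D} {f g : X ⟶ commaCofree T E}
    (h : f.right = g.right) : f = g := by
  have left_eq (k : X ⟶ commaCofree T E) : k.left = X.hom ≫ T.map k.right :=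
    (Category.comp_id k.left).symm.trans k.w
  ext
  · rw [left_eq, left_eq, h]
  · exact h

theorem commaCofree_injective [HasInitial C] (E : D) [Injective E] :
    Injective (commaCofree T E) where
  factors g f _ := by
    have := comma_mono_right f
    obtain ⟨a, ha⟩ := Injective.factors (J := E) g.right f.right
    exact ⟨commaCofreeLift a, commaCofree_hom_ext ha⟩

theorem isSplitEpi_map_of_hereditary_comma [HasInitial C] [InitialMonoClass C]
    (hT : Hereditary (Comma (𝟭 C) T)) {E E' : D} (p : E ⟶ E') [Epi p] [Injective E] :
    IsSplitEpi (T.map p) := by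
  let Q : Comma (𝟭 C) T := { left := T.obj E, right := E', hom := T.map p }
  let q : commaCofree T E ⟶ Q := { left := 𝟙 _, right := p }
  have : Epi q.left := inferInstanceAs (Epi (𝟙 (T.obj E)))
  have : Epi q.right := ‹Epi p›
  have hQ : Injective Q := hT q (comma_epi_of_epi_of_epi q) (commaCofree_injective E)
  let ι : commaExtendInitial T E' ⟶ commaCofree T E' := commaExtendInitialDesc (𝟙 E')
  have : Mono ι.left := inferInstanceAs (Mono (initial.to (T.obj E')))
  have : Mono ι.right := inferInstanceAs (Mono (𝟙 E'))
  have : Mono ι := comma_mono_of_mono_of_mono ι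
  let κ : commaExtendInitial T E' ⟶ Q := commaExtendInitialDesc (𝟙 E')
  obtain ⟨φ, hφ⟩ := hQ.factors κ ι
  have hright : φ.right = 𝟙 E' :=
    (Category.id_comp _).symm.trans (congrArg CommaMorphism.right hφ)
  have hw : φ.left ≫ T.map p = T.map φ.right := φ.w.trans (Category.id_comp _)
  have hsection : φ.left ≫ T.map p = 𝟙 (T.obj E') :=
    hw.trans ((congrArg T.map hright).trans (T.map_id E'))
  exact ⟨⟨φ.left, hsection⟩⟩

end HereditaryComma

section MapBiproduct

variable {C D : Type*} [Category* C] [Category* D] [HasZeroMorphisms C] [HasZeroMorphisms D]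
  (H : C ⥤ D) [H.PreservesZeroMorphisms] {Z : D}

theorem map_biproduct_hom_ext {J : Type*} (X : J → C) [HasBiproduct X]
    [PreservesBiproduct X H] {f g : Z ⟶ H.obj (⨁ X)}
    (h : ∀ j, f ≫ H.map (biproduct.π X j) = g ≫ H.map (biproduct.π X j)) : f = g :=
  (isBilimitOfPreserves H (biproduct.isBilimit X)).isLimit.hom_ext fun j => h j.as

theorem map_biprod_hom_ext {X Y : C} [HasBinaryBiproduct X Y]
    [PreservesBinaryBiproduct X Y H] {f g : Z ⟶ H.obj (X ⊞ Y)}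
    (hfst : f ≫ H.map biprod.fst = g ≫ H.map biprod.fst)
    (hsnd : f ≫ H.map biprod.snd = g ≫ H.map biprod.snd) : f = g :=
  (isBinaryBilimitOfPreserves H (BinaryBiproduct.isBilimit X Y)).isLimit.hom_ext fun
    | ⟨.left⟩ => hfst
    | ⟨.right⟩ => hsnd

theorem map_biprod_biproduct_hom_ext {J : Type*} {X : C} {Y : J → C} [HasBiproduct Y]
    [PreservesBiproduct Y H] [HasBinaryBiproduct X (⨁ Y)] [PreservesBinaryBiproduct X (⨁ Y) H]
    {f g : Z ⟶ H.obj (X ⊞ ⨁ Y)} (hfst : f ≫ H.map biprod.fst = g ≫ H.map biprod.fst)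
    (hsnd : ∀ j, f ≫ H.map (biprod.snd ≫ biproduct.π Y j) =
      g ≫ H.map (biprod.snd ≫ biproduct.π Y j)) : f = g :=
  map_biprod_hom_ext H hfst <| map_biproduct_hom_ext H Y fun j => by
    simpa only [Functor.map_comp, Category.assoc] using hsnd j

end MapBiproduct

section Comodules

variable {n : ℕ} {A : Fin n → Type u} [∀ i, Category.{v} (A i)]
  {F : ∀ ⦃i j : Fin n⦄, i < j → (A i ⥤ A j)}
  {δ : ∀ ⦃i k j : Fin n⦄ (h₁ : i < k) (h₂ : k < j), F (h₁.trans h₂) ⟶ F h₁ ⋙ F h₂} {m : ℕ}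

namespace Comod

section Basic

variable {s : Set (Fin n)} {M N P : Comod F δ s}

theorem hom_ext {f g : M ⟶ N} (h : ∀ i, f.f i = g.f i) : f = g :=
  ComodHom.ext (funext h)

theorem comp_f (f : M ⟶ N) (g : N ⟶ P) (i : s) : (f ≫ g).f i = f.f i ≫ g.f i := rfl

/-- The isomorphism of comodules with given components. -/
def isoMk (φ : ∀ i, M.X i ≅ N.X i)
    (comm : ∀ {i j : s} (h : i.1 < j.1), (φ j).hom ≫ N.d h = M.d h ≫ (F h).map (φ i).hom) :
    M ≅ N where
  hom := ⟨fun i => (φ i).hom, comm⟩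
  inv := ⟨fun i => (φ i).inv, fun {i j} h => by
    rw [Iso.inv_comp_eq, ← Category.assoc, comm, Category.assoc, ← Functor.map_comp,
      Iso.hom_inv_id, CategoryTheory.Functor.map_id, Category.comp_id]⟩
  hom_inv_id := hom_ext fun i => (φ i).hom_inv_id
  inv_hom_id := hom_ext fun i => (φ i).inv_hom_id

/-- The restriction of a comodule over all indices to the indices in `s`. -/
def restrict (s : Set (Fin n)) : Comod F δ Set.univ ⥤ Comod F δ s where
  obj Z :=
    { X i := Z.X ⟨i, trivial⟩
      d {i j} h := Z.d (i := ⟨i, trivial⟩) (j := ⟨j, trivial⟩) h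
      compat {i k j} h₁ h₂ :=
        Z.compat (i := ⟨i, trivial⟩) (k := ⟨k, trivial⟩) (j := ⟨j, trivial⟩) h₁ h₂ }
  map f :=
    { f i := f.f ⟨i, trivial⟩
      comm {i j} h := f.comm (i := ⟨i, trivial⟩) (j := ⟨j, trivial⟩) h }

end Basic

/-- A cross coaction of an `F^{≤m}`-comodule `M` on an `F^{>m}`-comodule `N`: the structure maps
from the indices `> m` to the indices `≤ m` that make `M` and `N` into a single comodule. -/
structure CrossCoaction (M : Comod F δ (lowSet n m)) (N : Comod F δ (highSet n m)) where
  c : ∀ (i : lowSet n m) (j : highSet n m), N.X j ⟶ (F (low_lt_high i j)).obj (M.X i)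
  low_compat : ∀ {i k : lowSet n m} (h : i.1 < k.1) (j : highSet n m),
    c k j ≫ (F (low_lt_high k j)).map (M.d h) = c i j ≫ (δ h (low_lt_high k j)).app (M.X i)
  high_compat : ∀ (i : lowSet n m) {j k : highSet n m} (h : j.1 < k.1),
    N.d h ≫ (F h).map (c i j) = c i k ≫ (δ (low_lt_high i j) h).app (M.X i)

/-- The cross coaction between the two restrictions of a comodule over all indices. -/
def crossCoaction (m : ℕ) (Z : Comod F δ Set.univ) :
    CrossCoaction ((restrict (lowSet n m)).obj Z) ((restrict (highSet n m)).obj Z) where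
  c i j := Z.d (i := ⟨i, trivial⟩) (j := ⟨j, trivial⟩) (low_lt_high i j)
  low_compat {i k} h j :=
    Z.compat (i := ⟨i, trivial⟩) (k := ⟨k, trivial⟩) (j := ⟨j, trivial⟩) h (low_lt_high k j)
  high_compat i {j k} h :=
    Z.compat (i := ⟨i, trivial⟩) (k := ⟨j, trivial⟩) (j := ⟨k, trivial⟩) (low_lt_high i j) h

theorem hom_ext_of_restrict (m : ℕ) {Z W : Comod F δ Set.univ} {f g : Z ⟶ W}
    (hlow : (restrict (lowSet n m)).map f = (restrict (lowSet n m)).map g)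
    (hhigh : (restrict (highSet n m)).map f = (restrict (highSet n m)).map g) : f = g := by
  refine hom_ext fun i => ?_
  obtain hi | hi := lt_or_ge (i.1 : ℕ) m
  · exact congrArg (fun t => ComodHom.f t ⟨i.1, hi⟩) hlow
  · exact congrArg (fun t => ComodHom.f t ⟨i.1, hi⟩) hhigh

section homOfRestrict

variable {Z W : Comod F δ Set.univ}
  (a : (restrict (lowSet n m)).obj Z ⟶ (restrict (lowSet n m)).obj W)
  (b : (restrict (highSet n m)).obj Z ⟶ (restrict (highSet n m)).obj W)

/-- The component at `i` of `homOfRestrict`. -/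
def homOfRestrictF (i : Fin n) :
    Decidable ((i : ℕ) < m) → (Z.X ⟨i, trivial⟩ ⟶ W.X ⟨i, trivial⟩)
  | isTrue hi => a.f ⟨i, hi⟩
  | isFalse hi => b.f ⟨i, not_lt.mp hi⟩

theorem homOfRestrictF_comm (hab : ∀ i j, b.f j ≫ (W.crossCoaction m).c i j =
    (Z.crossCoaction m).c i j ≫ (F (low_lt_high i j)).map (a.f i))
    {i j : Fin n} (h : i < j) (ci : Decidable ((i : ℕ) < m))
    (cj : Decidable ((j : ℕ) < m)) :
    homOfRestrictF a b j cj ≫ W.d (i := ⟨i, trivial⟩) (j := ⟨j, trivial⟩) h =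
      Z.d (i := ⟨i, trivial⟩) (j := ⟨j, trivial⟩) h ≫ (F h).map (homOfRestrictF a b i ci) := by
  match ci, cj with
  | isTrue hi, isTrue hj => exact a.comm (i := ⟨i, hi⟩) (j := ⟨j, hj⟩) h
  | isTrue hi, isFalse hj => exact hab ⟨i, hi⟩ ⟨j, not_lt.mp hj⟩
  | isFalse hi, isTrue hj => exact absurd ((Fin.lt_def.mp h).trans hj) hi
  | isFalse hi, isFalse hj => exact b.comm (i := ⟨i, not_lt.mp hi⟩) (j := ⟨j, not_lt.mp hj⟩) h

variable (hab : ∀ i j, b.f j ≫ (W.crossCoaction m).c i j =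
  (Z.crossCoaction m).c i j ≫ (F (low_lt_high i j)).map (a.f i))

/-- The morphism of comodules over all indices with given restrictions. -/
def homOfRestrict : Z ⟶ W where
  f i := homOfRestrictF a b i.1 inferInstance
  comm h := homOfRestrictF_comm a b hab h _ _

theorem restrict_low_map_homOfRestrict :
    (restrict (lowSet n m)).map (homOfRestrict a b hab) = a := by
  have homOfRestrictF_low (i : lowSet n m) :
      ∀ ci : Decidable ((i.1 : ℕ) < m), homOfRestrictF a b i.1 ci = a.f i
    | isTrue _ => rfl
    | isFalse hi => absurd i.2 hi
  exact hom_ext fun i => homOfRestrictF_low i _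

theorem restrict_high_map_homOfRestrict :
    (restrict (highSet n m)).map (homOfRestrict a b hab) = b := by
  have homOfRestrictF_high (j : highSet n m) :
      ∀ cj : Decidable ((j.1 : ℕ) < m), homOfRestrictF a b j.1 cj = b.f j
    | isTrue hj => absurd hj (not_lt.mpr j.2)
    | isFalse _ => rfl
  exact hom_ext fun j => homOfRestrictF_high j _

end homOfRestrict

namespace CrossCoaction

variable {M : Comod F δ (lowSet n m)} {N : Comod F δ (highSet n m)}

/-- The pullback of a cross coaction along a morphism of `F^{>m}`-comodules. -/
def precomp (γ : CrossCoaction M N) {N' : Comod F δ (highSet n m)} (t : N' ⟶ N) :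
    CrossCoaction M N' where
  c i j := t.f j ≫ γ.c i j
  low_compat h j := by rw [Category.assoc, γ.low_compat, Category.assoc]
  high_compat i {j k} h := by
    rw [Functor.map_comp, ← Category.assoc, ← t.comm, Category.assoc, γ.high_compat,
      Category.assoc]

/-- The component at `i` of the glued comodule. Matching on the decision, rather than on a proof
obtained from it, makes the component reduce to that of `M` or `N`. -/
def glueX (M : Comod F δ (lowSet n m)) (N : Comod F δ (highSet n m)) (i : Fin n) :
    Decidable ((i : ℕ) < m) → A i
  | isTrue h => M.X ⟨i, h⟩
  | isFalse h => N.X ⟨i, not_lt.mp h⟩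

/-- The structure maps of the glued comodule. -/
def glueD (γ : CrossCoaction M N) {i j : Fin n} (h : i < j) :
    ∀ (ci : Decidable ((i : ℕ) < m)) (cj : Decidable ((j : ℕ) < m)),
      glueX M N j cj ⟶ (F h).obj (glueX M N i ci)
  | isTrue hi, isTrue hj => M.d (i := ⟨i, hi⟩) (j := ⟨j, hj⟩) h
  | isTrue hi, isFalse hj => γ.c ⟨i, hi⟩ ⟨j, not_lt.mp hj⟩
  | isFalse hi, isTrue hj => absurd ((Fin.lt_def.mp h).trans hj) hi
  | isFalse hi, isFalse hj => N.d (i := ⟨i, not_lt.mp hi⟩) (j := ⟨j, not_lt.mp hj⟩) h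

theorem glueD_compat (γ : CrossCoaction M N) {i k j : Fin n} (hik : i < k) (hkj : k < j)
    (ci : Decidable ((i : ℕ) < m)) (ck : Decidable ((k : ℕ) < m))
    (cj : Decidable ((j : ℕ) < m)) :
    γ.glueD hkj ck cj ≫ (F hkj).map (γ.glueD hik ci ck) =
      γ.glueD (hik.trans hkj) ci cj ≫ (δ hik hkj).app (glueX M N i ci) := by
  have hik' := Fin.lt_def.mp hik
  have hkj' := Fin.lt_def.mp hkj
  match ci, ck, cj with
  | isTrue hi, isTrue hk, isTrue hj =>
    exact M.compat (i := ⟨i, hi⟩) (k := ⟨k, hk⟩) (j := ⟨j, hj⟩) hik hkj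
  | isTrue hi, isTrue hk, isFalse hj =>
    exact γ.low_compat (i := ⟨i, hi⟩) (k := ⟨k, hk⟩) hik ⟨j, not_lt.mp hj⟩
  | isTrue hi, isFalse hk, isFalse hj =>
    exact γ.high_compat ⟨i, hi⟩ (j := ⟨k, not_lt.mp hk⟩) (k := ⟨j, not_lt.mp hj⟩) hkj
  | isFalse hi, isFalse hk, isFalse hj =>
    exact N.compat (i := ⟨i, not_lt.mp hi⟩) (k := ⟨k, not_lt.mp hk⟩) (j := ⟨j, not_lt.mp hj⟩)
      hik hkj
  | isFalse hi, isTrue hk, _ => exact absurd (hik'.trans hk) hi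
  | _, isFalse hk, isTrue hj => exact absurd (hkj'.trans hj) hk

/-- The comodule over all indices obtained by gluing `M` and `N` along a cross coaction. -/
def glue (γ : CrossCoaction M N) : Comod F δ Set.univ where
  X i := glueX M N i.1 inferInstance
  d h := γ.glueD h _ _
  compat h₁ h₂ := γ.glueD_compat h₁ h₂ _ _ _

/-- The identification of the components of the glued comodule at the indices `≤ m`. -/
def glueXLowIso (M : Comod F δ (lowSet n m)) (N : Comod F δ (highSet n m)) (i : lowSet n m) :
    ∀ ci : Decidable ((i.1 : ℕ) < m), glueX M N i.1 ci ≅ M.X i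
  | isTrue _ => Iso.refl _
  | isFalse h => absurd i.2 h

/-- The identification of the components of the glued comodule at the indices `> m`. -/
def glueXHighIso (M : Comod F δ (lowSet n m)) (N : Comod F δ (highSet n m)) (j : highSet n m) :
    ∀ cj : Decidable ((j.1 : ℕ) < m), glueX M N j.1 cj ≅ N.X j
  | isTrue h => absurd h (not_lt.mpr j.2)
  | isFalse _ => Iso.refl _

theorem glueD_low_low (γ : CrossCoaction M N) {i j : lowSet n m} (h : i.1 < j.1)
    (ci : Decidable ((i.1 : ℕ) < m)) (cj : Decidable ((j.1 : ℕ) < m)) :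
    (glueXLowIso M N j cj).hom ≫ M.d h =
      γ.glueD h ci cj ≫ (F h).map (glueXLowIso M N i ci).hom := by
  match ci, cj with
  | isTrue _, isTrue _ => simp [glueXLowIso, glueD, glueX]
  | isFalse hi, _ => exact absurd i.2 hi
  | _, isFalse hj => exact absurd j.2 hj

theorem glueD_high_high (γ : CrossCoaction M N) {i j : highSet n m} (h : i.1 < j.1)
    (ci : Decidable ((i.1 : ℕ) < m)) (cj : Decidable ((j.1 : ℕ) < m)) :
    (glueXHighIso M N j cj).hom ≫ N.d h =
      γ.glueD h ci cj ≫ (F h).map (glueXHighIso M N i ci).hom := by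
  match ci, cj with
  | isFalse _, isFalse _ => simp [glueXHighIso, glueD, glueX]
  | isTrue hi, _ => exact absurd hi (not_lt.mpr i.2)
  | _, isTrue hj => exact absurd hj (not_lt.mpr j.2)

theorem glueD_low_high (γ : CrossCoaction M N) (i : lowSet n m) (j : highSet n m)
    (ci : Decidable ((i.1 : ℕ) < m)) (cj : Decidable ((j.1 : ℕ) < m)) :
    (glueXHighIso M N j cj).hom ≫ γ.c i j =
      γ.glueD (low_lt_high i j) ci cj ≫
        (F (low_lt_high i j)).map (glueXLowIso M N i ci).hom := by
  match ci, cj with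
  | isTrue _, isFalse _ => simp [glueXLowIso, glueXHighIso, glueD, glueX]
  | isFalse hi, _ => exact absurd i.2 hi
  | _, isTrue hj => exact absurd hj (not_lt.mpr j.2)

/-- The restriction of the glued comodule to the indices `≤ m` is `M`. -/
def glueLowIso (γ : CrossCoaction M N) : (restrict (lowSet n m)).obj γ.glue ≅ M :=
  isoMk (fun i => glueXLowIso M N i _) fun h => γ.glueD_low_low h _ _

/-- The restriction of the glued comodule to the indices `> m` is `N`. -/
def glueHighIso (γ : CrossCoaction M N) : (restrict (highSet n m)).obj γ.glue ≅ N :=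
  isoMk (fun j => glueXHighIso M N j _) fun h => γ.glueD_high_high h _ _

theorem glueHighIso_hom_c (γ : CrossCoaction M N) (i : lowSet n m) (j : highSet n m) :
    γ.glueHighIso.hom.f j ≫ γ.c i j =
      (γ.glue.crossCoaction m).c i j ≫ (F (low_lt_high i j)).map (γ.glueLowIso.hom.f i) :=
  γ.glueD_low_high i j _ _

end CrossCoaction

/-- A functor `T` from `F^{≤m}`-comodules to `F^{>m}`-comodules classifies cross coactions if
every cross coaction of `M` on `N` is the pullback of a universal one, on `T M`, along a unique
morphism `N ⟶ T M`, and the universal cross coactions are natural in `M`. -/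
structure CrossCoactionClassifier
    (T : Comod F δ (lowSet n m) ⥤ Comod F δ (highSet n m)) where
  univ : ∀ M, CrossCoaction M (T.obj M)
  map_univ : ∀ {M M' : Comod F δ (lowSet n m)} (f : M ⟶ M') (i : lowSet n m)
    (j : highSet n m),
    (T.map f).f j ≫ (univ M').c i j =
      (univ M).c i j ≫ (F (low_lt_high i j)).map (f.f i)
  lift : ∀ {M : Comod F δ (lowSet n m)} {N : Comod F δ (highSet n m)},
    CrossCoaction M N → (N ⟶ T.obj M)
  lift_univ : ∀ {M : Comod F δ (lowSet n m)} {N : Comod F δ (highSet n m)}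
    (γ : CrossCoaction M N) (i : lowSet n m) (j : highSet n m),
    (lift γ).f j ≫ (univ M).c i j = γ.c i j
  hom_ext : ∀ {M : Comod F δ (lowSet n m)} {N : Comod F δ (highSet n m)} {s t : N ⟶ T.obj M},
    (∀ i j, s.f j ≫ (univ M).c i j = t.f j ≫ (univ M).c i j) → s = t

namespace CrossCoactionClassifier

variable {T : Comod F δ (lowSet n m) ⥤ Comod F δ (highSet n m)}
  (K : CrossCoactionClassifier T)

theorem lift_precomp_univ {M : Comod F δ (lowSet n m)} {N : Comod F δ (highSet n m)}
    (t : N ⟶ T.obj M) : K.lift ((K.univ M).precomp t) = t :=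
  K.hom_ext fun i j => K.lift_univ _ i j

theorem comp_lift_eq_lift_comp_map_iff {M M' : Comod F δ (lowSet n m)}
    {N N' : Comod F δ (highSet n m)} (γ : CrossCoaction M N) (γ' : CrossCoaction M' N')
    (a : M ⟶ M') (b : N ⟶ N') :
    b ≫ K.lift γ' = K.lift γ ≫ T.map a ↔
      ∀ i j, b.f j ≫ γ'.c i j = γ.c i j ≫ (F (low_lt_high i j)).map (a.f i) := by
  have left_c (i j) : (b ≫ K.lift γ').f j ≫ (K.univ M').c i j = b.f j ≫ γ'.c i j := by
    rw [comp_f, Category.assoc, K.lift_univ]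
  have right_c (i j) : (K.lift γ ≫ T.map a).f j ≫ (K.univ M').c i j =
      γ.c i j ≫ (F (low_lt_high i j)).map (a.f i) := by
    rw [comp_f, Category.assoc, K.map_univ, ← Category.assoc, K.lift_univ]
  simp only [← left_c, ← right_c]
  exact ⟨fun h i j => by rw [h], K.hom_ext⟩

/-- The functor sending a comodule over all indices to its two restrictions and the morphism
classifying its cross coaction. -/
def toComma : Comod F δ Set.univ ⥤ Comma (𝟭 (Comod F δ (highSet n m))) T where
  obj Z :=
    { left := (restrict (highSet n m)).obj Z
      right := (restrict (lowSet n m)).obj Z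
      hom := K.lift (Z.crossCoaction m) }
  map f :=
    { left := (restrict (highSet n m)).map f
      right := (restrict (lowSet n m)).map f
      w := (K.comp_lift_eq_lift_comp_map_iff _ _ _ _).mpr fun i j =>
        f.comm (i := ⟨i, trivial⟩) (j := ⟨j, trivial⟩) (low_lt_high i j) }

instance : K.toComma.Faithful where
  map_injective h :=
    hom_ext_of_restrict m (congrArg CommaMorphism.right h) (congrArg CommaMorphism.left h)

instance : K.toComma.Full where
  map_surjective g :=
    ⟨homOfRestrict g.right g.left ((K.comp_lift_eq_lift_comp_map_iff _ _ _ _).mp g.w),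
      CommaMorphism.ext (restrict_high_map_homOfRestrict _ _ _)
        (restrict_low_map_homOfRestrict _ _ _)⟩

instance : K.toComma.EssSurj where
  mem_essImage Y := by
    let γ := (K.univ Y.right).precomp Y.hom
    have hγ : K.lift γ = Y.hom := K.lift_precomp_univ Y.hom
    have hw : γ.glueHighIso.hom ≫ Y.hom =
        K.lift (γ.glue.crossCoaction m) ≫ T.map γ.glueLowIso.hom := by
      rw [← hγ]
      exact (K.comp_lift_eq_lift_comp_map_iff _ _ _ _).mpr γ.glueHighIso_hom_c
    exact ⟨γ.glue, ⟨Comma.isoMk γ.glueHighIso γ.glueLowIso hw⟩⟩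

instance : K.toComma.IsEquivalence where

end CrossCoactionClassifier

section ZeroComodule

variable [∀ i, Abelian (A i)] (F δ) (s : Set (Fin n))

open scoped ZeroObject in
/-- The comodule all of whose components are zero. -/
noncomputable def zero : Comod F δ s where
  X _ := 0
  d _ := 0
  compat _ _ := (isZero_zero _).eq_of_src _ _

/-- The zero comodule is initial. -/
noncomputable def zeroIsInitial : IsInitial (zero F δ s) :=
  IsInitial.ofUniqueHom (fun _ => ⟨fun _ => 0, fun _ => (isZero_zero _).eq_of_src _ _⟩)
    fun _ _ => hom_ext fun i => (isZero_zero (A i.1)).eq_of_src _ _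

instance : HasInitial (Comod F δ s) := (zeroIsInitial F δ s).hasInitial

instance : InitialMonoClass (Comod F δ s) :=
  InitialMonoClass.of_isInitial (zeroIsInitial F δ s) fun _ =>
    ⟨fun _ _ _ => hom_ext fun i => (isZero_zero (A i.1)).eq_of_tgt _ _⟩

end ZeroComodule

end Comod

section Projections

variable [∀ i, Abelian (A i)] (X : Comod F δ (lowSet n m)) (j : highSet n m)

/-- The projection of `⨁_{i ≤ m} F_{ij}(X_i)` to its summand at `i`. -/
noncomputable def VObj.π (i : lowSet n m) :
    VObj F δ X j ⟶ (F (low_lt_high i j)).obj (X.X i) :=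
  biproduct.π (fun i : lowSet n m => (F (low_lt_high i j)).obj (X.X i)) i

/-- The projection of `⨁_{k ≤ m} F_{kj}((F^{≤m}X)_k)` to its summand at `k`. -/
noncomputable def WObj.π (k : lowSet n m) :
    WObj F δ X j ⟶ (F (low_lt_high k j)).obj (Glow F δ X k) :=
  biproduct.π (fun k : lowSet n m => (F (low_lt_high k j)).obj (Glow F δ X k)) k

/-- The projection of `(F^{≤m}X)_k = X_k ⊕ ⨁_{i<k} F_{ik}(X_i)` to `X_k`. -/
noncomputable def Glow.diag (k : lowSet n m) : Glow F δ X k ⟶ X.X k :=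
  biprod.fst

/-- The projection of `(F^{≤m}X)_k = X_k ⊕ ⨁_{i<k} F_{ik}(X_i)` to `F_{ik}(X_i)`. -/
noncomputable def Glow.offDiag {i k : lowSet n m} (h : i.1 < k.1) :
    Glow F δ X k ⟶ (F h).obj (X.X i) :=
  biprod.snd ≫
    biproduct.π (fun i : {i : lowSet n m // i.1 < k.1} => (F i.2).obj (X.X i.1)) ⟨i, h⟩

variable {X j}

theorem VObj.hom_ext {Z : A j.1} {f g : Z ⟶ VObj F δ X j}
    (h : ∀ i, f ≫ VObj.π X j i = g ≫ VObj.π X j i) : f = g :=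
  biproduct.hom_ext f g h

theorem WObj.hom_ext {Z : A j.1} {f g : Z ⟶ WObj F δ X j}
    (h : ∀ k, f ≫ WObj.π X j k = g ≫ WObj.π X j k) : f = g :=
  biproduct.hom_ext f g h

theorem Vmap_π {Y : Comod F δ (lowSet n m)} (f : X ⟶ Y) (i : lowSet n m) :
    Vmap F δ f j ≫ VObj.π Y j i = VObj.π X j i ≫ (F (low_lt_high i j)).map (f.f i) :=
  biproduct.map_π (fun i => (F (low_lt_high i j)).map (f.f i)) i

theorem psi_π (k : lowSet n m) :
    psi F δ X j ≫ WObj.π X j k =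
      VObj.π X j k ≫ (F (low_lt_high k j)).map (coact F δ X k) := by
  delta psi VObj.π WObj.π VObj WObj
  refine biproduct.hom_ext' _ _ fun i => ?_
  rw [biproduct.matrix_π, biproduct.ι_desc]
  by_cases h : i = k
  · subst h
    simp
  · rw [dif_neg h, biproduct.ι_π_ne_assoc _ h, zero_comp]

theorem coact_diag (k : lowSet n m) : coact F δ X k ≫ Glow.diag X k = 𝟙 (X.X k) :=
  biprod.lift_fst _ _

theorem coact_offDiag {i k : lowSet n m} (h : i.1 < k.1) :
    coact F δ X k ≫ Glow.offDiag X h = X.d h := by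
  delta coact Glow.offDiag Glow
  rw [biprod.lift_snd_assoc, biproduct.lift_π]

theorem psi_π_map_diag (k : lowSet n m) :
    psi F δ X j ≫ WObj.π X j k ≫ (F (low_lt_high k j)).map (Glow.diag X k) = VObj.π X j k := by
  rw [reassoc_of% psi_π (F := F) (δ := δ), ← Functor.map_comp, coact_diag,
    CategoryTheory.Functor.map_id, Category.comp_id]

theorem psi_π_map_offDiag {i k : lowSet n m} (h : i.1 < k.1) :
    psi F δ X j ≫ WObj.π X j k ≫ (F (low_lt_high k j)).map (Glow.offDiag X h) =
      VObj.π X j k ≫ (F (low_lt_high k j)).map (X.d h) := by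
  rw [reassoc_of% psi_π (F := F) (δ := δ), ← Functor.map_comp, coact_offDiag]

section Additive

variable [∀ ⦃i j : Fin n⦄ (h : i < j), (F h).Additive]

theorem VObj.map_hom_ext {k : Fin n} (hjk : j.1 < k) {Z : A k}
    {f g : Z ⟶ (F hjk).obj (VObj F δ X j)}
    (h : ∀ i, f ≫ (F hjk).map (VObj.π X j i) = g ≫ (F hjk).map (VObj.π X j i)) : f = g :=
  map_biproduct_hom_ext (F hjk) _ h

theorem Glow.map_hom_ext {k : lowSet n m} {j : Fin n} (hkj : k.1 < j) {Z : A j}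
    {f g : Z ⟶ (F hkj).obj (Glow F δ X k)}
    (hdiag : f ≫ (F hkj).map (Glow.diag X k) = g ≫ (F hkj).map (Glow.diag X k))
    (hoff : ∀ {i : lowSet n m} (h : i.1 < k.1),
      f ≫ (F hkj).map (Glow.offDiag X h) = g ≫ (F hkj).map (Glow.offDiag X h)) : f = g := by
  have := preservesBinaryBiproducts_of_preservesBiproducts (F hkj)
  exact map_biprod_biproduct_hom_ext (F hkj) hdiag fun i => hoff i.2

theorem phi_π_map_diag (k : lowSet n m) :
    phi F δ X j ≫ WObj.π X j k ≫ (F (low_lt_high k j)).map (Glow.diag X k) = VObj.π X j k := by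
  delta phi VObj.π WObj.π Glow.diag VObj WObj Glow
  refine biproduct.hom_ext' _ _ fun i => ?_
  rw [biproduct.matrix_π_assoc, biproduct.ι_desc_assoc]
  by_cases hik : i = k
  · subst hik
    simp [← Functor.map_comp]
  · rw [biproduct.ι_π_ne _ hik]
    by_cases hlt : i.1 < k.1
    · simp [hlt, ← Functor.map_comp]
    · simp [hlt, hik]

theorem phi_π_map_offDiag {i k : lowSet n m} (h : i.1 < k.1) :
    phi F δ X j ≫ WObj.π X j k ≫ (F (low_lt_high k j)).map (Glow.offDiag X h) =
      VObj.π X j i ≫ (δ h (low_lt_high k j)).app (X.X i) := by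
  delta phi VObj.π WObj.π Glow.offDiag VObj WObj Glow
  refine biproduct.hom_ext' _ _ fun l => ?_
  rw [biproduct.matrix_π_assoc, biproduct.ι_desc_assoc]
  by_cases hli : l = i
  · subst hli
    simp [h, ← Functor.map_comp]
  · rw [biproduct.ι_π_ne_assoc _ hli, zero_comp]
    by_cases hlk : l.1 < k.1
    · have hne : (⟨l, hlk⟩ : {i : lowSet n m // i.1 < k.1}) ≠ ⟨i, h⟩ :=
        fun heq => hli (congrArg Subtype.val heq)
      rw [dif_pos hlk, Category.assoc, ← Functor.map_comp]
      simp [biproduct.ι_π_ne _ hne]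
    · by_cases hk : l = k
      · subst hk
        simp [← Functor.map_comp]
      · simp [hlk, hk]

theorem comp_phi_eq_comp_psi_iff {Z : A j.1} (w : Z ⟶ VObj F δ X j) :
    w ≫ phi F δ X j = w ≫ psi F δ X j ↔
      ∀ {i k : lowSet n m} (h : i.1 < k.1),
        (w ≫ VObj.π X j k) ≫ (F (low_lt_high k j)).map (X.d h) =
          (w ≫ VObj.π X j i) ≫ (δ h (low_lt_high k j)).app (X.X i) := by
  simp only [Category.assoc, ← psi_π_map_offDiag, ← phi_π_map_offDiag]
  constructor
  · intro hw i k h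
    rw [reassoc_of% hw]
  · refine fun hw => WObj.hom_ext fun k => Glow.map_hom_ext (low_lt_high k j) ?_ fun h => ?_
    · simp only [Category.assoc, phi_π_map_diag, psi_π_map_diag]
    · simp only [Category.assoc, hw h]

theorem lamV_map_π {k : highSet n m} (h : j.1 < k.1) (i : lowSet n m) :
    lamV F δ X j k h ≫ (F h).map (VObj.π X j i) =
      VObj.π X k i ≫ (δ (low_lt_high i j) h).app (X.X i) := by
  delta lamV VObj.π VObj
  refine biproduct.hom_ext' _ _ fun l => ?_
  rw [biproduct.ι_desc_assoc, Category.assoc, ← Functor.map_comp]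
  by_cases hli : l = i
  · subst hli
    simp
  · rw [biproduct.ι_π_ne _ hli, biproduct.ι_π_ne_assoc _ hli, Functor.map_zero, comp_zero,
      zero_comp]

end Additive

end Projections

namespace Comod

section Equalizer

variable [∀ i, Abelian (A i)]

namespace CrossCoaction

variable {M : Comod F δ (lowSet n m)} {N : Comod F δ (highSet n m)}

/-- The components of a cross coaction assembled into maps `N_j ⟶ ⨁_{i ≤ m} F_{ij}(M_i)`. -/
noncomputable def toVObj (γ : CrossCoaction M N) (j : highSet n m) : N.X j ⟶ VObj F δ M j :=
  biproduct.lift fun i => γ.c i j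

theorem toVObj_π (γ : CrossCoaction M N) (i : lowSet n m) (j : highSet n m) :
    γ.toVObj j ≫ VObj.π M j i = γ.c i j :=
  biproduct.lift_π _ i

variable [∀ ⦃i j : Fin n⦄ (h : i < j), (F h).Additive]

theorem toVObj_phi (γ : CrossCoaction M N) (j : highSet n m) :
    γ.toVObj j ≫ phi F δ M j = γ.toVObj j ≫ psi F δ M j :=
  (comp_phi_eq_comp_psi_iff _).mpr fun h => by rw [toVObj_π, toVObj_π, γ.low_compat]

theorem toVObj_lamV (γ : CrossCoaction M N) {j k : highSet n m} (h : j.1 < k.1) :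
    γ.toVObj k ≫ lamV F δ M j k h = N.d h ≫ (F h).map (γ.toVObj j) :=
  VObj.map_hom_ext h fun i => by
    rw [Category.assoc, lamV_map_π, ← Category.assoc, toVObj_π, Category.assoc,
      ← Functor.map_comp, toVObj_π, γ.high_compat]

/-- The cross coaction with components `e_j` followed by the projections, for a family
`e_j : N_j ⟶ ⨁_{i ≤ m} F_{ij}(M_i)` that equalizes `phi` and `psi` and commutes with the coactions
of the indices `> m`. -/
noncomputable def ofVObj (e : ∀ j, N.X j ⟶ VObj F δ M j)
    (hw : ∀ j, e j ≫ phi F δ M j = e j ≫ psi F δ M j)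
    (hcoact : ∀ (j k : highSet n m) (h : j.1 < k.1),
      N.d h ≫ (F h).map (e j) = e k ≫ lamV F δ M j k h) : CrossCoaction M N where
  c i j := e j ≫ VObj.π M j i
  low_compat h j := (comp_phi_eq_comp_psi_iff (e j)).mp (hw j) h
  high_compat i j k h := by
    rw [Functor.map_comp, reassoc_of% hcoact j k h, lamV_map_π, Category.assoc]

end CrossCoaction

variable [∀ ⦃i j : Fin n⦄ (h : i < j), (F h).Additive]
  [∀ ⦃i j : Fin n⦄ (h : i < j), (F h).PreservesMonomorphisms]

theorem exists_hom_comp_eq_toVObj {M : Comod F δ (lowSet n m)} {N N' : Comod F δ (highSet n m)}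
    {e : ∀ j, N.X j ⟶ VObj F δ M j} {hw : ∀ j, e j ≫ phi F δ M j = e j ≫ psi F δ M j}
    (hlim : ∀ j, Nonempty (IsLimit (Fork.ofι (e j) (hw j))))
    (hcoact : ∀ (j k : highSet n m) (h : j.1 < k.1),
      N.d h ≫ (F h).map (e j) = e k ≫ lamV F δ M j k h)
    (γ : CrossCoaction M N') : ∃ t : N' ⟶ N, ∀ j, t.f j ≫ e j = γ.toVObj j := by
  have hlift (j) : ∃ t : N'.X j ⟶ N.X j, t ≫ e j = γ.toVObj j :=
    let ⟨t, ht⟩ := Fork.IsLimit.lift' (hlim j).some (γ.toVObj j) (γ.toVObj_phi j)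
    ⟨t, ht⟩
  choose t ht using hlift
  refine ⟨⟨t, fun {j k} h => ?_⟩, ht⟩
  have : Mono (e j) := mono_of_isLimit_fork (hlim j).some
  rw [← cancel_mono ((F h).map (e j))]
  calc (t k ≫ N.d h) ≫ (F h).map (e j)
    _ = γ.toVObj k ≫ lamV F δ M j k h := by rw [Category.assoc, hcoact, reassoc_of% ht k]
    _ = N'.d h ≫ (F h).map (γ.toVObj j) := γ.toVObj_lamV h
    _ = (N'.d h ≫ (F h).map (t j)) ≫ (F h).map (e j) := by
      rw [Category.assoc, ← Functor.map_comp, ht]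

/-- A functor whose values are the equalizers of `phi` and `psi`, naturally and compatibly with
the coactions, classifies cross coactions. -/
noncomputable def CrossCoactionClassifier.ofEqualizer
    {T : Comod F δ (lowSet n m) ⥤ Comod F δ (highSet n m)}
    (e : ∀ X j, (T.obj X).X j ⟶ VObj F δ X j)
    (hw : ∀ X j, e X j ≫ phi F δ X j = e X j ≫ psi F δ X j)
    (hlim : ∀ X j, Nonempty (IsLimit (Fork.ofι (e X j) (hw X j))))
    (hnat : ∀ (X Y : Comod F δ (lowSet n m)) (f : X ⟶ Y) (j : highSet n m),
      (T.map f).f j ≫ e Y j = e X j ≫ Vmap F δ f j)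
    (hcoact : ∀ X (j k : highSet n m) (h : j.1 < k.1),
      (T.obj X).d h ≫ (F h).map (e X j) = e X k ≫ lamV F δ X j k h) :
    CrossCoactionClassifier T where
  univ M := .ofVObj (e M) (hw M) (hcoact M)
  map_univ {M M'} f i j := by
    simp only [CrossCoaction.ofVObj, reassoc_of% hnat M M' f j, Vmap_π, Category.assoc]
  lift {M _} γ := (exists_hom_comp_eq_toVObj (hlim M) (hcoact M) γ).choose
  lift_univ {M _} γ i j := by
    rw [CrossCoaction.ofVObj,
      reassoc_of% (exists_hom_comp_eq_toVObj (hlim M) (hcoact M) γ).choose_spec j,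
      γ.toVObj_π]
  hom_ext {M _ s t} h := Comod.hom_ext fun j => by
    have : Mono (e M j) := mono_of_isLimit_fork (hlim M j).some
    refine (cancel_mono (e M j)).mp (VObj.hom_ext fun i => ?_)
    simpa only [CrossCoaction.ofVObj, Category.assoc] using h i j

end Equalizer

end Comod

theorem stmt_16_general [∀ i, Abelian (A i)]
    [∀ ⦃i j : Fin n⦄ (h : i < j), (F h).Additive]
    [∀ ⦃i j : Fin n⦄ (h : i < j), (F h).PreservesMonomorphisms]
    (T : Comod F δ (lowSet n m) ⥤ Comod F δ (highSet n m))
    (e : ∀ X j, (T.obj X).X j ⟶ VObj F δ X j)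
    (hw : ∀ X j, e X j ≫ phi F δ X j = e X j ≫ psi F δ X j)
    (hlim : ∀ X j, Nonempty (IsLimit (Fork.ofι (e X j) (hw X j))))
    (hnat : ∀ (X Y : Comod F δ (lowSet n m)) (f : X ⟶ Y) (j : highSet n m),
      (T.map f).f j ≫ e Y j = e X j ≫ Vmap F δ f j)
    (hcoact : ∀ X (j k : highSet n m) (h : j.1 < k.1),
      (T.obj X).d h ≫ (F h).map (e X j) = e X k ≫ lamV F δ X j k h)
    (hH : Hereditary (Comod F δ Set.univ))
    {E E' : Comod F δ (lowSet n m)} (p : E ⟶ E') [Epi p] [Injective E] :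
    IsSplitEpi (T.map p) := by
  let K := Comod.CrossCoactionClassifier.ofEqualizer e hw hlim hnat hcoact
  have hcomma : Hereditary (Comma (𝟭 (Comod F δ (highSet n m))) T) :=
    hH.of_equivalence K.toComma.asEquivalence
  exact isSplitEpi_map_of_hereditary_comma hcomma p

end Comodules

theorem stmt_16
    -- coassociativity of the comonad data:
    (hδ : ∀ ⦃i k l j : Fin n⦄ (h₁ : i < k) (h₂ : k < l) (h₃ : l < j) (X : A i),
      (δ h₁ (h₂.trans h₃)).app X ≫ (δ h₂ h₃).app ((F h₁).obj X) =
        (δ (h₁.trans h₂) h₃).app X ≫ (F h₃).map ((δ h₁ h₂).app X))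
    -- the functors `F_{ij}` are additive and left exact:
    (hadd : ∀ ⦃i j : Fin n⦄ (h : i < j), (F h).Additive)
    (hlex : ∀ ⦃i j : Fin n⦄ (h : i < j), PreservesFiniteLimits (F h))
    -- the functors `T^m`, together with the data exhibiting the underlying object of
    -- `T^m X` at each index `j > m` as the equalizer of `φ = ρ^{V^m}` and
    -- `ψ = V^m(d_X)`, naturally in `X` and compatibly with the induced coactions:
    (T : ∀ (m : ℕ), 1 ≤ m → m < n →
      (Comod F δ (lowSet n m) ⥤ Comod F δ (highSet n m)))
    (e : ∀ (m : ℕ) (h₁ : 1 ≤ m) (h₂ : m < n) (X : Comod F δ (lowSet n m))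
      (j : highSet n m), ((T m h₁ h₂).obj X).X j ⟶ VObj F δ X j)
    (hw : ∀ (m : ℕ) (h₁ : 1 ≤ m) (h₂ : m < n) (X : Comod F δ (lowSet n m))
      (j : highSet n m),
      e m h₁ h₂ X j ≫ phi F δ X j = e m h₁ h₂ X j ≫ psi F δ X j)
    (hlim : ∀ (m : ℕ) (h₁ : 1 ≤ m) (h₂ : m < n) (X : Comod F δ (lowSet n m))
      (j : highSet n m),
      Nonempty (IsLimit (Fork.ofι (e m h₁ h₂ X j) (hw m h₁ h₂ X j))))
    (hnat : ∀ (m : ℕ) (h₁ : 1 ≤ m) (h₂ : m < n) (X Y : Comod F δ (lowSet n m))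
      (f : X ⟶ Y) (j : highSet n m),
      ((T m h₁ h₂).map f).f j ≫ e m h₁ h₂ Y j = e m h₁ h₂ X j ≫ Vmap F δ f j)
    (hcoact : ∀ (m : ℕ) (h₁ : 1 ≤ m) (h₂ : m < n) (X : Comod F δ (lowSet n m))
      (j k : highSet n m) (h : j.1 < k.1),
      ((T m h₁ h₂).obj X).d h ≫ (F h).map (e m h₁ h₂ X j) =
        e m h₁ h₂ X k ≫ lamV F δ X j k h)
    -- the category of `F`-comodules is hereditary:
    (hH : Hereditary (Comod F δ Set.univ))
    -- then `T^m` sends epimorphisms between injective comodules to split epimorphisms: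
    (m : ℕ) (h₁ : 1 ≤ m) (h₂ : m < n)
    (E E' : Comod F δ (lowSet n m)) (p : E ⟶ E') (hp : Epi p)
    (hE : Injective E) (hE' : Injective E') :
    IsSplitEpi ((T m h₁ h₂).map p) := by
  have hmono ⦃i j : Fin n⦄ (h : i < j) : (F h).PreservesMonomorphisms := inferInstance
  exact stmt_16_general (T m h₁ h₂) (e m h₁ h₂) (hw m h₁ h₂) (hlim m h₁ h₂) (hnat m h₁ h₂)
    (hcoact m h₁ h₂) hH p
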